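/- arXiv:1605.08310 — 2 statements merged into one kernel-verified Lean document; each statement's English description precedes it below -/
import Mathlib

section
/- For every quasi-poset P on [n]: ehr^str_P(1) = 1 if P is discrete and 0 otherwise, and (-1)^{cl(P)} · ehr_P(-1) = 1 if P is discrete and 0 otherwise. -/
open Polynomial

/-- Number of monotone maps `Fin n → Fin k` for the quasi-poset `le` (the set `L_P(k)`). -/
noncomputable def LCount {n : ℕ} (le : Fin n → Fin n → Prop) (k : ℕ) : ℕ :=
  Nat.card {f : Fin n → Fin k // ∀ i j, le i j → f i ≤ f j}

/-- Number of strictly monotone maps `Fin n → Fin k` (the set `L^str_P(k)`). -/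
noncomputable def LstrCount {n : ℕ} (le : Fin n → Fin n → Prop) (k : ℕ) : ℕ :=
  Nat.card {f : Fin n → Fin k //
    (∀ i j, le i j → f i ≤ f j) ∧ (∀ i j, le i j → f i = f j → le j i)}

/-- `cl(P)`: the number of equivalence classes of the equivalence `i ≤_P j ∧ j ≤_P i`. -/
noncomputable def clQP {n : ℕ} (le : Fin n → Fin n → Prop) : ℕ :=
  Nat.card (Quot (fun i j : Fin n => le i j ∧ le j i))

/-!
A monotone map to `Fin k` is a multichain of length `k` from `⊥` to `⊤` in the lattice of lower
sets, so the counting polynomial `p` satisfies `p(k) = ζ ^ k ⊥ ⊤` in the incidence algebra of that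
lattice. Since `ζ` is an integral unit, `ζ⁻¹ = μ` is a polynomial in `ζ`, which lets this identity
be continued to `p(-1) = μ ⊥ ⊤`. If `a ≤ b` but not `b ≤ a`, the lower set `↓a` is superfluous:
`x ∪ ↓a = ⊤` forces `b ∈ x`, hence `a ∈ x` and `x = ⊤`. Weisner's theorem, which says that the sum
of `μ ⊥ x` over all `x` with `x ⊔ ↓a = ⊤` vanishes, then reduces to `μ ⊥ ⊤ = 0`. For a discrete
quasi-poset, a monotone map is an arbitrary function on the equivalence classes and `p = X ^ cl`.
-/

theorem exists_aeval_eq_units_inv {K A : Type*} [Field K] [Ring A] [Algebra K A] (u : Aˣ)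
    (hu : IsIntegral K (u : A)) : ∃ g : K[X], aeval (u : A) g = ↑u⁻¹ := by
  let S := Algebra.adjoin K {(u : A)}
  have : FiniteDimensional K S := .of_fg hu.fg_adjoin_singleton
  let x : S := ⟨u, Algebra.self_mem_adjoin_singleton K _⟩
  have mul_injective : Function.Injective (LinearMap.mulLeft K x) := fun y z hyz ↦
    Subtype.ext <| u.isUnit.mul_left_cancel <| congrArg Subtype.val hyz
  obtain ⟨y, hy⟩ := LinearMap.surjective_of_injective mul_injective 1
  obtain ⟨g, hg⟩ : (y : A) ∈ (aeval (u : A)).range :=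
    (Algebra.adjoin_singleton_eq_range_aeval K (u : A)).le y.2
  exact ⟨g, hg.trans <| Units.eq_inv_of_mul_eq_one_left <| congrArg Subtype.val hy⟩

theorem eq_of_eval_natCast_eq {R : Type*} [CommRing R] [IsDomain R] [CharZero R] {p q : R[X]}
    (h : ∀ k : ℕ, p.eval (k : R) = q.eval (k : R)) : p = q :=
  p.eq_of_infinite_eval_eq q <|
    (Set.infinite_range_of_injective Nat.cast_injective).mono (Set.range_subset_iff.2 h)

theorem eval_neg_one_eq_inv {K A : Type*} [Field K] [CharZero K] [Ring A] [Algebra K A]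
    (φ : A →ₗ[K] K) (u : Aˣ) (hu : IsIntegral K (u : A)) (p : K[X])
    (hp : ∀ k : ℕ, p.eval (k : K) = φ ((u : A) ^ k)) : p.eval (-1) = φ ↑u⁻¹ := by
  obtain ⟨g, hg⟩ := exists_aeval_eq_units_inv u hu
  -- `u⁻¹ = g(u)` makes `s(x) = p(x)` at all natural `x`, while `s(-1)` only involves values of `p`
  -- at natural numbers.
  let s : K[X] := ∑ i ∈ g.support, C (g.coeff i) * p.comp (X + C (i + 1 : K))
  have eval_s (m : ℕ) : s.eval (m - 1 : K) = φ ((u : A) ^ m * ↑u⁻¹) := by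
    rw [← hg, aeval_def, eval₂_eq_sum, sum_def, Finset.mul_sum, map_sum, eval_finsetSum]
    refine Finset.sum_congr rfl fun i _ ↦ ?_
    have shift : (m - 1 + (i + 1) : K) = ((m + i : ℕ) : K) := by push_cast; ring
    rw [← Algebra.smul_def, mul_smul_comm, map_smul, smul_eq_mul, ← pow_add, ← hp, ← shift]
    simp only [eval_mul, eval_C, eval_comp, eval_add, eval_X]
  have hs : s = p := eq_of_eval_natCast_eq fun k ↦ by
    simpa [pow_succ, hp] using eval_s (k + 1)
  simpa [hs] using eval_s 0

section Weisner

open Finset IncidenceAlgebra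

variable {L : Type*} (R : Type*) [AddCommGroup R] [One R] [Lattice L] [OrderBot L]
  [LocallyFiniteOrder L] [DecidableEq L]

/-- Weisner's theorem. -/
theorem sum_mu_bot_sup_eq_zero {a : L} (ha : a ≠ ⊥) (b : L) :
    ∑ x ∈ Icc ⊥ b with x ⊔ a = b, mu R ⊥ x = 0 := by
  have wf : WellFounded ((· < ·) : L → L → Prop) :=
    Set.wellFoundedOn_univ.1 (OrderBot.bddBelow Set.univ).wellFoundedOn_lt
  induction b using wf.induction with | _ b ih
  by_cases hab : a ≤ b
  · have filter_eq {y : L} (hy : y ∈ Icc ⊥ b) :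
        ({x ∈ Icc ⊥ b | x ⊔ a = y} : Finset L) = {x ∈ Icc ⊥ y | x ⊔ a = y} := by
      ext x
      simp only [mem_filter, mem_Icc, bot_le, true_and, and_congr_left_iff]
      rintro rfl
      exact ⟨fun _ ↦ le_sup_left, fun _ ↦ le_sup_left.trans (mem_Icc.1 hy).2⟩
    calc ∑ x ∈ Icc ⊥ b with x ⊔ a = b, mu R ⊥ x
        = ∑ y ∈ Icc ⊥ b, ∑ x ∈ Icc ⊥ y with x ⊔ a = y, mu R ⊥ x :=
          (sum_eq_single_of_mem b (by simp) fun y hy hyb ↦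
            ih y ((mem_Icc.1 hy).2.lt_of_ne hyb)).symm
      _ = ∑ y ∈ Icc ⊥ b, ∑ x ∈ Icc ⊥ b with x ⊔ a = y, mu R ⊥ x :=
          sum_congr rfl fun y hy ↦ by rw [filter_eq hy]
      _ = ∑ x ∈ Icc ⊥ b, mu R ⊥ x :=
          sum_fiberwise_of_maps_to (fun x hx ↦ by simpa [hab] using hx) _
      _ = 0 := by rw [sum_Icc_mu_right, if_neg fun hb ↦ ha (le_bot_iff.1 (hab.trans hb.ge))]
  · rw [filter_false_of_mem fun x _ hx ↦ hab (le_sup_right.trans hx.le), sum_empty]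

end Weisner

section ZetaPolynomial

open IncidenceAlgebra

theorem finite_incidenceAlgebra (R L : Type*) [Ring R] [IsNoetherianRing R] [Preorder L]
    [Finite L] : Module.Finite R (IncidenceAlgebra R L) :=
  let coeLinear : IncidenceAlgebra R L →ₗ[R] L → L → R :=
    { toFun := (⇑), map_add' := coe_add, map_smul' := coe_constSMul }
  Module.Finite.of_injective coeLinear DFunLike.coe_injective

theorem eval_neg_one_eq_mu {K L : Type*} [Field K] [CharZero K] [PartialOrder L] [Finite L]
    [LocallyFiniteOrder L] [DecidableEq L] [DecidableLE L] (x y : L) (p : K[X])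
    (hp : ∀ k : ℕ, p.eval (k : K) = (zeta K ^ k : IncidenceAlgebra K L) x y) :
    p.eval (-1) = mu K x y := by
  have := finite_incidenceAlgebra K L
  let entry : IncidenceAlgebra K L →ₗ[K] K :=
    { toFun f := f x y, map_add' _ _ := rfl, map_smul' _ _ := rfl }
  let zetaUnit : (IncidenceAlgebra K L)ˣ := ⟨zeta K, mu K, zeta_mul_mu, mu_mul_zeta K L⟩
  exact eval_neg_one_eq_inv entry zetaUnit (.of_finite K _) p hp

end ZetaPolynomial

section MonotoneMaps

open Finset IncidenceAlgebra

variable {α : Type*} [Preorder α] {U V : LowerSet α} {k : ℕ}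

/-- The lower set of points that a monotone map `f` on a lower set sends below the largest value,
taken in the ambient preorder `α` rather than in `U`. Peeling it off repeatedly turns `f` into a
multichain of lower sets. -/
def belowLast (f : U → Fin (k + 1)) (hf : Monotone f) : LowerSet α where
  carrier := {a | ∃ ha : a ∈ U, f ⟨a, ha⟩ ≠ Fin.last k}
  lower' := fun _ _ hba ⟨ha, hfa⟩ ↦ ⟨U.lower hba ha,
    ((hf (Subtype.mk_le_mk.2 hba)).trans_lt (Fin.lt_last_iff_ne_last.2 hfa)).ne⟩

theorem belowLast_le (f : U → Fin (k + 1)) (hf : Monotone f) : belowLast f hf ≤ U :=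
  fun _ ⟨ha, _⟩ ↦ ha

open Classical in
/-- The extension of `g : V → Fin k` to `U` by a new largest value off `V`; it is meant for
`V ≤ U` and restores the map from which `V` was split off by `belowLast`. -/
noncomputable def extendLast (U : LowerSet α) (g : V → Fin k) (u : U) : Fin (k + 1) :=
  if h : (u : α) ∈ V then (g ⟨u, h⟩).castSucc else Fin.last k

theorem monotone_extendLast {g : V → Fin k} (hg : Monotone g) : Monotone (extendLast U g) := by
  intro a b hab
  by_cases hb : (b : α) ∈ V
  · have ha : (a : α) ∈ V := V.lower hab hb
    simpa only [extendLast, ha, hb, dite_true, Fin.castSucc_le_castSucc_iff] using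
      hg (Subtype.mk_le_mk.2 hab)
  · simpa only [extendLast, hb, dite_false] using Fin.le_last _

theorem belowLast_extendLast (hVU : V ≤ U) {g : V → Fin k} (hg : Monotone g) :
    belowLast (extendLast U g) (monotone_extendLast hg) = V := by
  ext a
  constructor
  · rintro ⟨ha, hne⟩
    by_contra haV
    exact hne (dif_neg haV)
  · intro haV
    exact ⟨hVU haV, fun h ↦ Fin.castSucc_ne_last _ ((dif_pos haV).symm.trans h)⟩

/-- The monotone maps whose part below the largest value is `V` are the monotone maps on `V` with
one value fewer: the recursion step of the count of multichains. -/
noncomputable def belowLastFiberEquiv (hVU : V ≤ U) :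
    {f : {f : U → Fin (k + 1) // Monotone f} // belowLast f.1 f.2 = V} ≃
      {g : V → Fin k // Monotone g} where
  toFun f := ⟨fun v ↦ (f.1.1 ⟨v, hVU v.2⟩).castPred (f.2.ge v.2).2,
    fun _ _ hab ↦ Fin.castPred_le_castPred_iff.2 (f.1.2 hab)⟩
  invFun g := ⟨⟨extendLast U g.1, monotone_extendLast g.2⟩, belowLast_extendLast hVU g.2⟩
  left_inv := by
    rintro ⟨⟨f, hf⟩, rfl⟩
    ext u : 3
    by_cases hu : (u : α) ∈ belowLast f hf
    · simp only [extendLast, hu, dite_true, Fin.castSucc_castPred]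
    · have : f u = Fin.last k := by_contra fun hne ↦ hu ⟨u.2, hne⟩
      simp only [extendLast, hu, dite_false, this]
  right_inv g := by
    ext v : 2
    simp only [extendLast, v.2, dite_true, Fin.castPred_castSucc]

theorem card_monotone_fin_succ [Finite α] [LocallyFiniteOrder (LowerSet α)] (U : LowerSet α)
    (k : ℕ) : Nat.card {f : U → Fin (k + 1) // Monotone f} =
      ∑ V ∈ Icc ⊥ U, Nat.card {g : V → Fin k // Monotone g} := by
  classical
  have := Fintype.ofFinite {f : U → Fin (k + 1) // Monotone f}
  rw [Nat.card_eq_fintype_card, ← card_univ, card_eq_sum_card_fiberwise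
    (f := fun f ↦ belowLast f.1 f.2) (t := Icc ⊥ U)
    fun f _ ↦ mem_coe.2 <| mem_Icc.2 ⟨bot_le, belowLast_le f.1 f.2⟩]
  refine sum_congr rfl fun V hV ↦ ?_
  rw [← Nat.card_congr (belowLastFiberEquiv (mem_Icc.1 hV).2), Nat.card_eq_fintype_card,
    Fintype.card_subtype]

theorem card_monotone_fin_zero [DecidableEq (LowerSet α)] (U : LowerSet α) :
    Nat.card {f : U → Fin 0 // Monotone f} = if ⊥ = U then 1 else 0 := by
  split_ifs with hU
  · subst hU
    have : IsEmpty (⊥ : LowerSet α) := ⟨fun a ↦ a.2⟩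
    exact Nat.card_eq_one_iff_exists.2
      ⟨⟨isEmptyElim, fun a ↦ isEmptyElim a⟩, fun _ ↦ Subtype.ext (Subsingleton.elim _ _)⟩
  · obtain ⟨a, ha⟩ := LowerSet.coe_nonempty.2 (Ne.symm hU)
    exact Nat.card_eq_zero.2 <| .inl ⟨fun f ↦ (f.1 ⟨a, ha⟩).elim0⟩

theorem card_monotone_fin_eq_zeta_pow (R : Type*) [Semiring R] [Finite α]
    [LocallyFiniteOrder (LowerSet α)] [DecidableEq (LowerSet α)] [DecidableLE (LowerSet α)]
    (U : LowerSet α) (k : ℕ) :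
    (Nat.card {f : U → Fin k // Monotone f} : R) =
      (zeta R ^ k : IncidenceAlgebra R (LowerSet α)) ⊥ U := by
  induction k generalizing U with
  | zero => rw [card_monotone_fin_zero, pow_zero, one_apply, Nat.cast_ite, Nat.cast_one,
      Nat.cast_zero]
  | succ k ih =>
    rw [card_monotone_fin_succ, pow_succ, mul_apply, Nat.cast_sum]
    refine sum_congr rfl fun V hV ↦ ?_
    rw [ih, zeta_of_le (mem_Icc.1 hV).2, mul_one]

theorem card_monotone_top (α β : Type*) [Preorder α] [Preorder β] :
    Nat.card {f : (⊤ : LowerSet α) → β // Monotone f} = Nat.card {f : α → β // Monotone f} :=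
  Nat.card_congr
    { toFun f := ⟨fun a ↦ f.1 ⟨a, trivial⟩, fun _ _ hab ↦ f.2 hab⟩
      invFun f := ⟨fun a ↦ f.1 a, fun _ _ hab ↦ f.2 hab⟩ }

theorem card_monotone_of_symm {β : Type*} [Finite α] [PartialOrder β]
    (h : ∀ a b : α, a ≤ b → b ≤ a) :
    Nat.card {f : α → β // Monotone f} = Nat.card β ^ Nat.card (Antisymmetrization α (· ≤ ·)) := by
  have : Finite (Antisymmetrization α (· ≤ ·)) := Quotient.finite _
  rw [← Nat.card_fun]
  exact Nat.card_congr
    { toFun f := Quotient.lift f.1 fun _ _ hab ↦ le_antisymm (f.2 hab.1) (f.2 hab.2)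
      invFun g := ⟨g ∘ toAntisymmetrization (· ≤ ·),
        fun a b hab ↦ (congrArg g (Quotient.sound ⟨hab, h a b hab⟩)).le⟩
      right_inv _ := funext <| Quotient.ind fun _ ↦ rfl }

theorem card_strictly_monotone_of_unique (α β : Type*) [Preorder α] [Preorder β] [Unique β]
    [Decidable (∀ a b : α, a ≤ b → b ≤ a)] :
    Nat.card {f : α → β // Monotone f ∧ ∀ a b, a ≤ b → f a = f b → b ≤ a} =
      if ∀ a b : α, a ≤ b → b ≤ a then 1 else 0 := by
  split_ifs with h
  · exact Nat.card_eq_one_iff_exists.2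
      ⟨⟨default, monotone_const, fun a b hab _ ↦ h a b hab⟩,
        fun _ ↦ Subtype.ext (Subsingleton.elim _ _)⟩
  · exact Nat.card_eq_zero.2 <| .inl
      ⟨fun f ↦ h fun a b hab ↦ f.2.2 a b hab (Subsingleton.elim _ _)⟩

theorem mu_lowerSet_bot_top_eq_zero (R : Type*) [AddCommGroup R] [One R]
    [LocallyFiniteOrder (LowerSet α)] [DecidableEq (LowerSet α)]
    (h : ¬ ∀ a b : α, a ≤ b → b ≤ a) : mu R (⊥ : LowerSet α) ⊤ = 0 := by
  push Not at h
  obtain ⟨a, b, hab, hba⟩ := h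
  have Iic_ne_bot : LowerSet.Iic a ≠ ⊥ := fun h ↦ by
    simpa using h.le (LowerSet.mem_Iic_iff.2 le_rfl)
  have eq_top_of_sup (x : LowerSet α) (hx : x ⊔ LowerSet.Iic a = ⊤) : x = ⊤ := by
    have hb : b ∈ x := (LowerSet.mem_sup_iff.1 (hx.ge trivial)).resolve_right hba
    rwa [sup_eq_left.2 (LowerSet.Iic_le.2 (x.lower hab hb))] at hx
  rw [← sum_mu_bot_sup_eq_zero R Iic_ne_bot ⊤, sum_eq_single_of_mem ⊤ (by simp)]
  exact fun x hx hne ↦ absurd (eq_top_of_sup x (mem_filter.1 hx).2) hne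

theorem eval_neg_one_eq_zero_of_not_symm {K : Type*} [Field K] [CharZero K] [Finite α]
    (h : ¬ ∀ a b : α, a ≤ b → b ≤ a) (p : K[X])
    (hp : ∀ k : ℕ, p.eval (k : K) = Nat.card {f : α → Fin k // Monotone f}) :
    p.eval (-1) = 0 := by
  classical
  have := Fintype.ofFinite (LowerSet α)
  let := Fintype.toLocallyFiniteOrder (α := LowerSet α)
  rw [← mu_lowerSet_bot_top_eq_zero K h]
  refine eval_neg_one_eq_mu ⊥ ⊤ p fun k ↦ ?_
  rw [hp, ← card_monotone_top, card_monotone_fin_eq_zeta_pow]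

theorem eval_neg_one_of_symm {K : Type*} [Field K] [CharZero K] [Finite α]
    (h : ∀ a b : α, a ≤ b → b ≤ a) (p : K[X])
    (hp : ∀ k : ℕ, p.eval (k : K) = Nat.card {f : α → Fin k // Monotone f}) :
    p.eval (-1) = (-1) ^ Nat.card (Antisymmetrization α (· ≤ ·)) := by
  have hpX : p = X ^ Nat.card (Antisymmetrization α (· ≤ ·)) := eq_of_eval_natCast_eq fun k ↦ by
    rw [hp, card_monotone_of_symm h, Nat.card_fin, Nat.cast_pow, eval_pow, eval_X]
  rw [hpX, eval_pow, eval_X]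

end MonotoneMaps

theorem eval_at_one_general {α K : Type*} [Preorder α] [Finite α] [Field K] [CharZero K]
    [Decidable (∀ a b : α, a ≤ b → b ≤ a)] (p q : K[X])
    (hp : ∀ k : ℕ, p.eval (k : K) = Nat.card {f : α → Fin k // Monotone f})
    (hq : ∀ k : ℕ, q.eval (k : K) =
      Nat.card {f : α → Fin k // Monotone f ∧ ∀ a b, a ≤ b → f a = f b → b ≤ a}) :
    (q.eval 1 = if ∀ a b : α, a ≤ b → b ≤ a then 1 else 0) ∧
    ((-1) ^ Nat.card (Antisymmetrization α (· ≤ ·)) * p.eval (-1) =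
      if ∀ a b : α, a ≤ b → b ≤ a then 1 else 0) := by
  constructor
  · rw [← Nat.cast_one, hq, card_strictly_monotone_of_unique, Nat.cast_ite, Nat.cast_one,
      Nat.cast_zero]
  · split_ifs with h
    · rw [eval_neg_one_of_symm h p hp, ← mul_pow, neg_one_mul, neg_neg, one_pow]
    · rw [eval_neg_one_eq_zero_of_not_symm h p hp, mul_zero]

open Classical in
/-- `ehr^str_P(1) = (-1)^{cl(P)} ehr_P(-1) = 1` if `P` is discrete, `0` otherwise. -/
theorem eval_at_one {n : ℕ} (le : Fin n → Fin n → Prop)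
    (hrefl : ∀ i, le i i)
    (htrans : ∀ i j k, le i j → le j k → le i k)
    (p q : ℚ[X])
    (hp : ∀ k : ℕ, p.eval (k : ℚ) = LCount le k)
    (hq : ∀ k : ℕ, q.eval (k : ℚ) = LstrCount le k) :
    (q.eval (1 : ℚ) = if (∀ i j, le i j → le j i) then 1 else 0) ∧
    ((-1 : ℚ) ^ clQP le * p.eval (-1 : ℚ) =
      if (∀ i j, le i j → le j i) then 1 else 0) := by
  let preorder : Preorder (Fin n) :=
    { le := le, lt a b := le a b ∧ ¬ le b a, le_refl := hrefl, le_trans := htrans }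
  exact eval_at_one_general (α := Fin n) p q hp hq
end

section
/- Let P be a quasi-poset on [n]. If r ◁ P and r' ◁ P/r, then: r' ◁ P, r ◁ P|r', and the following equalities of preorders on Fin n hold: (P/r)/r' = P/r', (P/r)|r' = (P|r')/r, and (P|r')|r = P|r. Moreover, the map (r, r') ↦ (r', r) is a bijection from the set {(r, r') : r ◁ P and r' ◁ P/r} onto the set {(s, s') : s ◁ P and s' ◁ P|s}. -/
/-- The quotient quasi-order `≤_{P/~}`: the transitive (here reflexive-transitive)
closure of (`i ≤_P j` or `i ~ j`). -/
def quotLe {n : ℕ} (le r : Fin n → Fin n → Prop) : Fin n → Fin n → Prop :=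
  Relation.ReflTransGen (fun i j => le i j ∨ r i j)

/-- The restricted quasi-order `≤_{P|~}`: `i ≤_P j` and `i ~ j`. -/
def restLe {n : ℕ} (le r : Fin n → Fin n → Prop) : Fin n → Fin n → Prop :=
  fun i j => le i j ∧ r i j

/-- `~ ◁ P`: the equivalence relation `r` is `P`-compatible. -/
def Compat {n : ℕ} (le r : Fin n → Fin n → Prop) : Prop :=
  (∀ x y, r x y →
    Relation.ReflTransGen (fun a b => r a x ∧ r b x ∧ (le a b ∨ le b a)) x y) ∧
  (∀ i j, quotLe le r i j → quotLe le r j i → r i j)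

/-!
Over equivalence relations, the classes of `r` are connected in `R` exactly when `R ⊓ r` generates
`r`. Either side of the exchange forces `r ≤ s`, whence `(R ⊓ s) ⊓ r = R ⊓ r` and `(R/r)/s = R/s`,
so generation and acyclicity transfer between the two sides. The one point that needs an argument
is `(R/r) ⊓ s = (R ⊓ s)/r`: a path in `R/r` between two elements of one class of `s` closes up to a
cycle in `R/s`, so antisymmetry of `R/s` modulo `s` keeps every step of the path in that class.
-/

open Relation

section Exchange

variable {α : Type*} {R R' r s : α → α → Prop}

/-- The quotient `R/r` of a relation `R` by `r`, still viewed as a relation on the original type. -/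
def quotientRel (R r : α → α → Prop) : α → α → Prop :=
  ReflTransGen (R ⊔ r)

/-- Every class of `r` is connected for the restriction of `R` to it. The class is written as
`{a | r a x}`, which is only meaningful when `r` is an equivalence relation. -/
def HasConnectedClasses (R r : α → α → Prop) : Prop :=
  ∀ x y, r x y → ReflTransGen (fun a b => r a x ∧ r b x ∧ SymmGen R a b) x y

/-- Antisymmetry of `R/r` up to `r`: elements on a common cycle of `R/r` are identified by `r`. -/
def QuotientAntisymm (R r : α → α → Prop) : Prop :=
  ∀ i j, quotientRel R r i j → quotientRel R r j i → r i j

/-- Compatibility `r ◁ R` of an equivalence relation `r` with an arbitrary relation `R`. That `r` is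
an equivalence relation is left as a separate hypothesis. The restriction of `R` along `r`, written
`R|r` in the literature, is the infimum `R ⊓ r`. -/
def IsCompatible (R r : α → α → Prop) : Prop :=
  HasConnectedClasses R r ∧ QuotientAntisymm R r

theorem le_quotientRel_left : R ≤ quotientRel R r :=
  fun _ _ h => .single (.inl h)

theorem le_quotientRel_right : r ≤ quotientRel R r :=
  fun _ _ h => .single (.inr h)

theorem quotientRel_mono (hR : R ≤ R') (hrs : r ≤ s) : quotientRel R r ≤ quotientRel R' s :=
  ReflTransGen.mono (sup_le_sup hR hrs)

theorem quotientRel_quotientRel (hrs : r ≤ s) :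
    quotientRel (quotientRel R r) s = quotientRel R s :=
  le_antisymm
    (reflTransGen_closed (sup_le (quotientRel_mono le_rfl hrs) le_quotientRel_right))
    (quotientRel_mono le_quotientRel_left le_rfl)

theorem quotientRel_inf_le (hs : Equivalence s) (hrs : r ≤ s) : quotientRel (R ⊓ s) r ≤ s :=
  reflTransGen_le_of_equivalence_of_le hs (sup_le inf_le_right hrs)

theorem quotientRel_le_eqvGen (hr : r ≤ EqvGen R) : quotientRel R r ≤ EqvGen R :=
  reflTransGen_le_of_equivalence_of_le (EqvGen.is_equivalence R)
    (sup_le (fun _ _ h => .rel _ _ h) hr)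

theorem hasConnectedClasses_iff_le_eqvGen (hr : Equivalence r) :
    HasConnectedClasses R r ↔ r ≤ EqvGen (R ⊓ r) := by
  rw [← EqvGen.reflTransGen_symmGen]
  constructor
  · intro h x y hxy
    refine ReflTransGen.mono ?_ x y (h x y hxy)
    rintro a b ⟨hax, hbx, hab⟩
    have hab_r : r a b := hr.trans hax (hr.symm hbx)
    exact hab.imp (fun h => ⟨h, hab_r⟩) (fun h => ⟨h, hr.symm hab_r⟩)
  · intro h x y hxy
    have step_le : SymmGen (R ⊓ r) ≤ r :=
      fun _ _ hab => hab.elim And.right (fun h => hr.symm h.2)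
    replace hxy : ReflTransGen (SymmGen (R ⊓ r)) x y := h x y hxy
    induction hxy with
    | refl => exact .refl
    | @tail b c hxb hbc ih =>
      have hbx : r b x := hr.symm (reflTransGen_le_of_equivalence_of_le hr step_le x b hxb)
      have hcx : r c x := hr.trans (hr.symm (step_le b c hbc)) hbx
      exact ih.tail ⟨hbx, hcx, hbc.imp And.left And.left⟩

theorem quotientRel_inf_of_cycle (hrs : r ≤ s) (hRs : QuotientAntisymm R s) {i j : α}
    (hij : quotientRel R r i j) (hji : quotientRel R s j i) : quotientRel (R ⊓ s) r i j := by
  induction hij with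
  | refl => exact .refl
  | @tail b c hib hbc ih =>
    have hbc' : quotientRel R s b c := .single (hbc.imp_right (hrs b c))
    have hcb : quotientRel R s c b := hji.trans (quotientRel_mono le_rfl hrs i b hib)
    have hbc_s : s b c := hRs b c hbc' hcb
    exact (ih (hbc'.trans hji)).tail (hbc.imp_left fun h => ⟨h, hbc_s⟩)

theorem quotientRel_inf_eq (hs : Equivalence s) (hrs : r ≤ s) (hRs : QuotientAntisymm R s) :
    quotientRel R r ⊓ s = quotientRel (R ⊓ s) r := by
  refine le_antisymm ?_ (le_inf (quotientRel_mono inf_le_left le_rfl) (quotientRel_inf_le hs hrs))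
  rintro i j ⟨hij, hij_s⟩
  exact quotientRel_inf_of_cycle hrs hRs hij (le_quotientRel_right j i (hs.symm hij_s))

namespace QuotientAntisymm

theorem le_of_quotientRel (hr : Equivalence r) (h : QuotientAntisymm (quotientRel R r) s) :
    r ≤ s := by
  have r_le : r ≤ quotientRel (quotientRel R r) s :=
    le_quotientRel_right.trans le_quotientRel_left
  exact fun i j hij => h i j (r_le i j hij) (r_le j i (hr.symm hij))

theorem quotientRel_iff (hrs : r ≤ s) :
    QuotientAntisymm (quotientRel R r) s ↔ QuotientAntisymm R s := by
  rw [QuotientAntisymm, quotientRel_quotientRel hrs, QuotientAntisymm]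

theorem anti (hR : R ≤ R') (h : QuotientAntisymm R' r) : QuotientAntisymm R r :=
  fun i j hij hji => h i j (quotientRel_mono hR le_rfl i j hij) (quotientRel_mono hR le_rfl j i hji)

theorem of_inf (hrs : r ≤ s) (hRs : QuotientAntisymm R s)
    (h : QuotientAntisymm (R ⊓ s) r) : QuotientAntisymm R r := by
  intro i j hij hji
  have quotientRel_le : quotientRel R r ≤ quotientRel R s := quotientRel_mono le_rfl hrs
  exact h i j (quotientRel_inf_of_cycle hrs hRs hij (quotientRel_le j i hji))
    (quotientRel_inf_of_cycle hrs hRs hji (quotientRel_le i j hij))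

end QuotientAntisymm

namespace HasConnectedClasses

theorem mono (hR : R ≤ R') (h : HasConnectedClasses R r) : HasConnectedClasses R' r :=
  fun x y hxy => ReflTransGen.mono
    (fun _ _ ⟨hax, hbx, hab⟩ => ⟨hax, hbx, hab.imp (hR _ _) (hR _ _)⟩) x y (h x y hxy)

theorem inf_iff (hr : Equivalence r) (hrs : r ≤ s) :
    HasConnectedClasses (R ⊓ s) r ↔ HasConnectedClasses R r := by
  rw [hasConnectedClasses_iff_le_eqvGen hr, hasConnectedClasses_iff_le_eqvGen hr, inf_assoc,
    inf_eq_right.2 hrs]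

theorem le_of_inf (hr : Equivalence r) (hs : Equivalence s) (h : HasConnectedClasses (R ⊓ s) r) :
    r ≤ s :=
  calc r ≤ EqvGen (R ⊓ s ⊓ r) := (hasConnectedClasses_iff_le_eqvGen hr).1 h
    _ ≤ EqvGen s := EqvGen.mono (inf_le_left.trans inf_le_right)
    _ = s := hs.eqvGen_eq

theorem of_quotientRel (hr : Equivalence r) (hs : Equivalence s) (hrs : r ≤ s)
    (hRs : QuotientAntisymm R s) (hRr : HasConnectedClasses R r)
    (h : HasConnectedClasses (quotientRel R r) s) : HasConnectedClasses R s := by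
  rw [hasConnectedClasses_iff_le_eqvGen hr] at hRr
  rw [hasConnectedClasses_iff_le_eqvGen hs] at h ⊢
  have r_le : r ≤ EqvGen (R ⊓ s) := hRr.trans (EqvGen.mono (inf_le_inf_left R hrs))
  calc s ≤ EqvGen (quotientRel R r ⊓ s) := h
    _ = EqvGen (quotientRel (R ⊓ s) r) := by rw [quotientRel_inf_eq hs hrs hRs]
    _ ≤ EqvGen (EqvGen (R ⊓ s)) := EqvGen.mono (quotientRel_le_eqvGen r_le)
    _ = EqvGen (R ⊓ s) := (EqvGen.is_equivalence _).eqvGen_eq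

end HasConnectedClasses

namespace IsCompatible

theorem exchange (hr : Equivalence r) (hs : Equivalence s) (hRr : IsCompatible R r)
    (h : IsCompatible (quotientRel R r) s) : IsCompatible R s ∧ IsCompatible (R ⊓ s) r := by
  have hrs : r ≤ s := h.2.le_of_quotientRel hr
  have hRs : QuotientAntisymm R s := (QuotientAntisymm.quotientRel_iff hrs).1 h.2
  exact ⟨⟨.of_quotientRel hr hs hrs hRs hRr.1 h.1, hRs⟩,
    (HasConnectedClasses.inf_iff hr hrs).2 hRr.1, hRr.2.anti inf_le_left⟩

theorem exchange_symm (hs : Equivalence s) (hr : Equivalence r) (hRs : IsCompatible R s)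
    (h : IsCompatible (R ⊓ s) r) : IsCompatible R r ∧ IsCompatible (quotientRel R r) s := by
  have hrs : r ≤ s := h.1.le_of_inf hr hs
  exact ⟨⟨(HasConnectedClasses.inf_iff hr hrs).1 h.1, .of_inf hrs hRs.2 h.2⟩,
    hRs.1.mono le_quotientRel_left, (QuotientAntisymm.quotientRel_iff hrs).2 hRs.2⟩

end IsCompatible

end Exchange

theorem compat_exchange_general {α : Type*} (R : α → α → Prop) :
    (∀ r s : α → α → Prop,
      Equivalence r → IsCompatible R r → Equivalence s → IsCompatible (quotientRel R r) s →
        IsCompatible R s ∧ IsCompatible (R ⊓ s) r ∧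
        quotientRel (quotientRel R r) s = quotientRel R s ∧
        quotientRel R r ⊓ s = quotientRel (R ⊓ s) r ∧
        R ⊓ s ⊓ r = R ⊓ r) ∧
    Set.BijOn Prod.swap
      {p : (α → α → Prop) × (α → α → Prop) |
        Equivalence p.1 ∧ IsCompatible R p.1 ∧ Equivalence p.2 ∧
          IsCompatible (quotientRel R p.1) p.2}
      {p | Equivalence p.1 ∧ IsCompatible R p.1 ∧ Equivalence p.2 ∧
        IsCompatible (R ⊓ p.1) p.2} := by
  constructor
  · intro r s hr hRr hs h
    obtain ⟨hRs, hr'⟩ := hRr.exchange hr hs h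
    have hrs : r ≤ s := h.2.le_of_quotientRel hr
    exact ⟨hRs, hr', quotientRel_quotientRel hrs, quotientRel_inf_eq hs hrs hRs.2,
      by rw [inf_assoc, inf_eq_right.2 hrs]⟩
  · refine Set.InvOn.bijOn (f' := Prod.swap)
      ⟨fun p _ => p.swap_swap, fun p _ => p.swap_swap⟩ ?_ ?_
    · rintro ⟨r, s⟩ ⟨hr, hRr, hs, h⟩
      obtain ⟨hRs, hr'⟩ := hRr.exchange hr hs h
      exact ⟨hs, hRs, hr, hr'⟩
    · rintro ⟨s, r⟩ ⟨hs, hRs, hr, h⟩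
      obtain ⟨hRr, hRrs⟩ := hRs.exchange_symm hs hr h
      exact ⟨hr, hRr, hs, hRrs⟩

/-- If `r ◁ P` and `r' ◁ P/r`, then `r' ◁ P`, `r ◁ P|r'`, with
`(P/r)/r' = P/r'`, `(P/r)|r' = (P|r')/r` and `(P|r')|r = P|r`; moreover
`(r, r') ↦ (r', r)` is a bijection between the corresponding sets of pairs. -/
theorem compat_exchange {n : ℕ} (le : Fin n → Fin n → Prop)
    (hrefl : ∀ i, le i i)
    (htrans : ∀ i j k, le i j → le j k → le i k) :
    (∀ r r' : Fin n → Fin n → Prop,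
      Equivalence r → Compat le r → Equivalence r' → Compat (quotLe le r) r' →
        Compat le r' ∧ Compat (restLe le r') r ∧
        quotLe (quotLe le r) r' = quotLe le r' ∧
        restLe (quotLe le r) r' = quotLe (restLe le r') r ∧
        restLe (restLe le r') r = restLe le r) ∧
    Set.BijOn
      (fun p : (Fin n → Fin n → Prop) × (Fin n → Fin n → Prop) => (p.2, p.1))
      {p | Equivalence p.1 ∧ Compat le p.1 ∧ Equivalence p.2 ∧
        Compat (quotLe le p.1) p.2}
      {p | Equivalence p.1 ∧ Compat le p.1 ∧ Equivalence p.2 ∧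
        Compat (restLe le p.1) p.2} :=
  compat_exchange_general le
end
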